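/- arXiv:2208.11143 — 8 statements merged into one kernel-verified Lean document; each statement's English description precedes it below -/
import Mathlib

section
/- Let p(X) = Σ_{|S|=k} a_S det(X|_S) be an LPM polynomial of degree k with all a_S ≥ 0, let A₀, A₁ be real symmetric n×n matrices with A₁ positive definite, and let T ⊆ {1,…,n} be such that there exists S with |S| = k, a_S ≠ 0, and T ⊊ S. Then for every real number t₀ with p|_T(A₁t₀ − A₀) = 0, there exist an index i ∈ {1,…,n} \ T and a real number t₁ ≥ t₀ such that p|_{T∪{i}}(A₁t₁ − A₀) = 0. -/
/-!
Every `k`-set `S ⊇ T` contains exactly `k - |T|` indices outside `T`, so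
`∑ i ∉ T, p|_{T ∪ {i}} = (k - |T|) • p|_T` (`sum_lpmCond_insert`). For small `s > 0` every
principal minor of `A₁ - s A₀`, hence of `s⁻¹ A₁ - A₀`, is positive, so each `p|_{T ∪ {i}}` is
nonnegative at some `t ≥ t₀` (`exists_pminor_pos`). If none of the `p|_{T ∪ {i}}` vanished on
`[t₀, ∞)`, the intermediate value theorem would make all of them positive at `t₀`, and then so
would be their nonempty sum, contradicting `p|_T(t₀ A₁ - A₀) = 0`.
-/

open Matrix

/-- The principal minor of `X` indexed by the set `S`. -/
noncomputable def pminor {n : ℕ} (X : Matrix (Fin n) (Fin n) ℝ) (S : Finset (Fin n)) : ℝ :=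
  (X.submatrix (fun i : {i : Fin n // i ∈ S} => i.1) (fun i : {i : Fin n // i ∈ S} => i.1)).det

/-- The conditional polynomial `p|_T` of the degree-`k` LPM polynomial with
coefficients `a`, evaluated at `X`: the sum is over the `k`-sets `S` containing `T`. -/
noncomputable def lpmCond {n : ℕ} (k : ℕ) (a : Finset (Fin n) → ℝ) (T : Finset (Fin n))
    (X : Matrix (Fin n) (Fin n) ℝ) : ℝ :=
  ∑ S ∈ (Finset.powersetCard k (Finset.univ : Finset (Fin n))).filter (fun S => T ⊆ S),
    a S * pminor X S

lemma sum_lpmCond_insert {n : ℕ} (k : ℕ) (a : Finset (Fin n) → ℝ) (T : Finset (Fin n))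
    (X : Matrix (Fin n) (Fin n) ℝ) :
    ∑ i ∈ Tᶜ, lpmCond k a (insert i T) X = ((k - T.card : ℕ) : ℝ) * lpmCond k a T X := by
  unfold lpmCond
  simp only [Finset.sum_filter]
  rw [Finset.sum_comm, Finset.mul_sum]
  refine Finset.sum_congr rfl fun S hS => ?_
  rw [Finset.mem_powersetCard_univ] at hS
  by_cases hTS : T ⊆ S
  · have hfilter : Tᶜ.filter (fun i => insert i T ⊆ S) = S \ T := by
      ext i
      simp [Finset.insert_subset_iff, hTS, and_comm]
    rw [← Finset.sum_filter, hfilter, Finset.sum_const, Finset.card_sdiff_of_subset hTS, hS,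
      if_pos hTS, nsmul_eq_mul]
  · simp [Finset.insert_subset_iff, hTS]

lemma pminor_smul {n : ℕ} (c : ℝ) (X : Matrix (Fin n) (Fin n) ℝ) (S : Finset (Fin n)) :
    pminor (c • X) S = c ^ S.card * pminor X S := by
  unfold pminor
  rw [Matrix.submatrix_smul, Pi.smul_apply, Pi.smul_apply, Matrix.det_smul, Fintype.card_coe]

lemma continuous_pminor {n : ℕ} (S : Finset (Fin n)) :
    Continuous fun X : Matrix (Fin n) (Fin n) ℝ => pminor X S := by
  unfold pminor
  exact (continuous_id.matrix_submatrix _ _).matrix_det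

lemma exists_pminor_pos {n : ℕ} (A₀ A₁ : Matrix (Fin n) (Fin n) ℝ) (hA₁ : A₁.PosDef) (t₀ : ℝ) :
    ∃ t, t₀ ≤ t ∧ ∀ S, 0 < pminor (t • A₁ - A₀) S := by
  have hnear : ∀ S, ∀ᶠ s in nhdsWithin (0 : ℝ) (Set.Ioi 0), 0 < pminor (A₁ - s • A₀) S := by
    intro S
    have hcont : Continuous fun s : ℝ => pminor (A₁ - s • A₀) S :=
      (continuous_pminor S).comp (by fun_prop)
    have h0 : 0 < pminor (A₁ - (0 : ℝ) • A₀) S := by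
      rw [zero_smul, sub_zero]
      exact (hA₁.submatrix Subtype.val_injective).det_pos
    exact nhdsWithin_le_nhds (hcont.continuousAt.eventually (lt_mem_nhds h0))
  obtain ⟨s, hs, hst, hs0⟩ := ((Filter.eventually_all.2 hnear).and
    ((tendsto_inv_nhdsGT_zero.eventually_ge_atTop t₀).and self_mem_nhdsWithin)).exists
  replace hs0 : 0 < s := hs0
  refine ⟨s⁻¹, hst, fun S => ?_⟩
  have heq : s⁻¹ • A₁ - A₀ = s⁻¹ • (A₁ - s • A₀) := by
    rw [smul_sub, smul_smul, inv_mul_cancel₀ hs0.ne', one_smul]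
  rw [heq, pminor_smul]
  exact mul_pos (by positivity) (hs S)

theorem stmt3 {n k : ℕ}
    (A₀ A₁ : Matrix (Fin n) (Fin n) ℝ) (hA₀ : A₀.IsSymm) (hA₁ : A₁.PosDef)
    (a : Finset (Fin n) → ℝ) (ha : ∀ S, 0 ≤ a S)
    (T : Finset (Fin n))
    (hT : ∃ S : Finset (Fin n), S.card = k ∧ a S ≠ 0 ∧ T ⊂ S)
    (t₀ : ℝ) (ht : lpmCond k a T (t₀ • A₁ - A₀) = 0) :
    ∃ i ∉ T, ∃ t₁ : ℝ, t₀ ≤ t₁ ∧ lpmCond k a (insert i T) (t₁ • A₁ - A₀) = 0 := by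
  by_contra! hne
  obtain ⟨t, ht₀, hpos⟩ := exists_pminor_pos A₀ A₁ hA₁ t₀
  have hpos₀ : ∀ i ∈ Tᶜ, 0 < lpmCond k a (insert i T) (t₀ • A₁ - A₀) := by
    intro i hi
    by_contra! hle
    have hcont : Continuous fun u : ℝ => lpmCond k a (insert i T) (u • A₁ - A₀) := by
      unfold lpmCond
      exact continuous_finsetSum _ fun S _ =>
        continuous_const.mul ((continuous_pminor S).comp (by fun_prop))
    have hnonneg : 0 ≤ lpmCond k a (insert i T) (t • A₁ - A₀) :=
      Finset.sum_nonneg fun S _ => mul_nonneg (ha S) (hpos S).le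
    obtain ⟨u, hu, hu0⟩ := intermediate_value_Icc ht₀ hcont.continuousOn ⟨hle, hnonneg⟩
    exact hne i (Finset.mem_compl.1 hi) u hu.1 hu0
  obtain ⟨S, -, -, hTS⟩ := hT
  obtain ⟨i, -, hi⟩ := Finset.exists_of_ssubset hTS
  have hsum := Finset.sum_pos hpos₀ ⟨i, Finset.mem_compl.2 hi⟩
  rw [sum_lpmCond_insert, ht, mul_zero] at hsum
  exact hsum.false
end

section
/- Let p(X) = Σ_{|S|=k} a_S det(X|_S) be an LPM polynomial of degree k on symmetric n×n matrices, let T ⊆ {1,…,n} with |T| ≤ k, and let X be a symmetric n×n matrix such that X|_T is invertible. Then p|_T(X) = det(X|_T) · p_{−T}(X \ T), where X \ T = X|_{T^c} − X_{T^c,T}(X|_T)^{-1}X_{T,T^c} is the Schur complement of X with respect to T (a symmetric matrix indexed by T^c = {1,…,n} \ T). -/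
/-!
The identity holds term by term: for `T ⊆ S`, ordering `S` as `T` followed by `S \ T` turns `X|_S`
into a `2 × 2` block matrix with invertible corner `X|_T`, whose determinant is `det (X|_T)` times
that of the Schur complement of the corner. Forming this Schur complement commutes with restriction
to `S`: its entries at `i, j ∉ T` involve only `X i j`, row `i` and column `j` of `X` along `T`, and
`X|_T`, so it is the principal submatrix of `X \ T` indexed by `S \ T`.
-/

open Matrix

/-- The Schur complement `X \ T` of `X` with respect to the principal block indexed by `T`,
a matrix indexed by the complement of `T`. -/
noncomputable def schurCompl {n : ℕ} (T : Finset (Fin n)) (X : Matrix (Fin n) (Fin n) ℝ) :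
    Matrix {i : Fin n // i ∉ T} {i : Fin n // i ∉ T} ℝ :=
  X.submatrix (fun i : {i : Fin n // i ∉ T} => i.1) (fun j : {j : Fin n // j ∉ T} => j.1) -
    X.submatrix (fun i : {i : Fin n // i ∉ T} => i.1) (fun j : {j : Fin n // j ∈ T} => j.1) *
      (X.submatrix (fun i : {i : Fin n // i ∈ T} => i.1) (fun j : {j : Fin n // j ∈ T} => j.1))⁻¹ *
      X.submatrix (fun i : {i : Fin n // i ∈ T} => i.1) (fun j : {j : Fin n // j ∉ T} => j.1)

/-- The principal minor of a matrix `Y` indexed by the complement of `T`, taken over the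
index set `{j ∉ T : j ∈ S}`. -/
noncomputable def pminorC {n : ℕ} (T : Finset (Fin n))
    (Y : Matrix {i : Fin n // i ∉ T} {i : Fin n // i ∉ T} ℝ) (S : Finset (Fin n)) : ℝ :=
  (Y.submatrix (fun j : {j : {i : Fin n // i ∉ T} // (j : Fin n) ∈ S} => j.1)
    (fun j : {j : {i : Fin n // i ∉ T} // (j : Fin n) ∈ S} => j.1)).det

/-- The splitting of `S` as the disjoint union of `T` and `S \ T`, for `T ⊆ S`; the second summand
is encoded as in `pminorC`. -/
def splitEquiv {n : ℕ} {S T : Finset (Fin n)} (h : T ⊆ S) :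
    {i : Fin n // i ∈ T} ⊕ {j : {i : Fin n // i ∉ T} // (j : Fin n) ∈ S \ T} ≃
      {i : Fin n // i ∈ S} where
  toFun := Sum.elim (fun i => ⟨i.1, h i.2⟩) (fun j => ⟨j.1.1, (Finset.mem_sdiff.1 j.2).1⟩)
  invFun i := if hi : i.1 ∈ T then Sum.inl ⟨i.1, hi⟩
    else Sum.inr ⟨⟨i.1, hi⟩, Finset.mem_sdiff.2 ⟨i.2, hi⟩⟩
  left_inv := by
    rintro (⟨i, hi⟩ | ⟨⟨i, hi⟩, hj⟩) <;> simp [hi]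
  right_inv := by
    rintro ⟨i, hi⟩
    by_cases hT : i ∈ T <;> simp [hT]

/-- The Schur determinant formula for a single principal minor containing `T`. -/
lemma pminor_eq_det_mul_pminorC {n : ℕ} {S T : Finset (Fin n)} (h : T ⊆ S)
    (X : Matrix (Fin n) (Fin n) ℝ)
    (hinv : IsUnit (X.submatrix (fun i : {i : Fin n // i ∈ T} => i.1)
        (fun i : {i : Fin n // i ∈ T} => i.1)).det) :
    pminor X S =
      (X.submatrix (fun i : {i : Fin n // i ∈ T} => i.1)
          (fun i : {i : Fin n // i ∈ T} => i.1)).det *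
        pminorC T (schurCompl T X) (S \ T) := by
  let A := X.submatrix (fun i : {i : Fin n // i ∈ T} => i.1)
    (fun i : {i : Fin n // i ∈ T} => i.1)
  let r : {j : {i : Fin n // i ∉ T} // (j : Fin n) ∈ S \ T} → Fin n := fun j => j.1.1
  let B := X.submatrix (fun i : {i : Fin n // i ∈ T} => i.1) r
  let C := X.submatrix r (fun i : {i : Fin n // i ∈ T} => i.1)
  let _ : Invertible A := A.invertibleOfIsUnitDet hinv
  have hblocks : (X.submatrix (fun i : {i : Fin n // i ∈ S} => i.1)
      (fun i : {i : Fin n // i ∈ S} => i.1)).submatrix (splitEquiv h) (splitEquiv h) =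
      fromBlocks A B C (X.submatrix r r) := by
    ext (i | i) (j | j) <;> rfl
  rw [pminor, ← det_submatrix_equiv_self (splitEquiv h), hblocks, det_fromBlocks₁₁,
    invOf_eq_nonsing_inv]
  rfl

theorem stmt5 {n k : ℕ} (a : Finset (Fin n) → ℝ) (T : Finset (Fin n)) (hT : T.card ≤ k)
    (X : Matrix (Fin n) (Fin n) ℝ) (hX : X.IsSymm)
    (hinv : IsUnit (X.submatrix (fun i : {i : Fin n // i ∈ T} => i.1)
        (fun i : {i : Fin n // i ∈ T} => i.1)).det) :
    lpmCond k a T X =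
      (X.submatrix (fun i : {i : Fin n // i ∈ T} => i.1)
          (fun i : {i : Fin n // i ∈ T} => i.1)).det *
        ∑ S ∈ (Finset.powersetCard k (Finset.univ : Finset (Fin n))).filter (fun S => T ⊆ S),
          a S * pminorC T (schurCompl T X) (S \ T) := by
  rw [lpmCond, Finset.mul_sum]
  refine Finset.sum_congr rfl fun S hS => ?_
  rw [pminor_eq_det_mul_pminorC (Finset.mem_filter.1 hS).2 X hinv]
  ring
end

section
/- Let p(X) = Σ_{|S|=k} a_S det(X|_S) be an LPM polynomial of degree k on symmetric n×n matrices and let T ⊆ {1,…,n} with |T| ≤ k. Then for every symmetric n×n matrix X, the |T|-th derivative at t = 0 of the univariate polynomial t ↦ p(X + t·1_T) equals |T|! · p_{−T}(X), where 1_T is the diagonal 0/1 matrix whose i-th diagonal entry is 1 exactly when i ∈ T, and p_{−T}(X) = Σ_{T⊆S, |S|=k} a_S det(X|_{S\T}). -/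
/-!
Replacing the rows of `X` outside `S` by standard basis vectors gives an `n × n` matrix whose
determinant is the principal minor of `X` on `S` (`pminor_eq_det_piecewise`). Multilinearity of
the determinant in its rows then expands a principal minor of `X + diagonal d` as
`∑_{s ⊆ S} (∏_{i ∈ S \ s} d i) · det (X|_s)` (`pminor_add_diagonal`). For `d = t · 1_T` the product
is `t ^ |S \ s|` if `S \ s ⊆ T` and vanishes otherwise, so the only term contributing to the
coefficient of `t ^ |T|` is the one with `S \ s = T`; it exists exactly when `T ⊆ S`, and it is
`det (X|_{S \ T})`.
-/

open Matrix

/-- The LPM polynomial of degree `k` with coefficients `a`, evaluated at `X`. -/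
noncomputable def lpm {n : ℕ} (k : ℕ) (a : Finset (Fin n) → ℝ)
    (X : Matrix (Fin n) (Fin n) ℝ) : ℝ :=
  ∑ S ∈ Finset.powersetCard k (Finset.univ : Finset (Fin n)), a S * pminor X S

/-- The principal minor on `S` as an `n × n` determinant: the rows outside `S` are replaced by
standard basis vectors, which makes the matrix block triangular with an identity block. -/
lemma pminor_eq_det_piecewise {n : ℕ} (X : Matrix (Fin n) (Fin n) ℝ) (S : Finset (Fin n)) :
    pminor X S = Matrix.det (S.piecewise X (1 : Matrix (Fin n) (Fin n) ℝ)) := by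
  rw [Matrix.twoBlockTriangular_det (S.piecewise X (1 : Matrix (Fin n) (Fin n) ℝ))
    (fun i => i ∈ S)]
  · have h1 : Matrix.toSquareBlockProp (S.piecewise X (1 : Matrix (Fin n) (Fin n) ℝ))
        (fun i => i ∉ S) = 1 := by
      ext i j
      have hi := i.2
      change S.piecewise X (1 : Matrix (Fin n) (Fin n) ℝ) i.1 j.1 = _
      simp [Finset.piecewise, hi, Matrix.one_apply, Subtype.ext_iff]
    have h2 : Matrix.toSquareBlockProp (S.piecewise X (1 : Matrix (Fin n) (Fin n) ℝ))
        (fun i => i ∈ S) = X.submatrix (fun i : {i : Fin n // i ∈ S} => i.1)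
          (fun i : {i : Fin n // i ∈ S} => i.1) := by
      ext i j
      have hi := i.2
      change S.piecewise X (1 : Matrix (Fin n) (Fin n) ℝ) i.1 j.1 = _
      simp [Finset.piecewise, hi]
    rw [h1, h2, Matrix.det_one, mul_one, pminor]
    -- The two sides differ only in the `Fintype` instance on the subtype.
    congr!
  · intro i hi j hj
    have hij : i ≠ j := fun h => hi (h ▸ hj)
    simp [Finset.piecewise, hi, hij]

lemma pminor_add_diagonal {n : ℕ} (X : Matrix (Fin n) (Fin n) ℝ) (d : Fin n → ℝ)
    (S : Finset (Fin n)) :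
    pminor (X + Matrix.diagonal d) S
      = ∑ s ∈ S.powerset, (∏ i ∈ S \ s, d i) * pminor X s := by
  -- The added rows are `d i • e_i` on `S`, and the padding rows `e_i` off `S`.
  set m' : Fin n → Fin n → ℝ :=
    fun i => (if i ∈ S then d i else 1) • (1 : Matrix (Fin n) (Fin n) ℝ) i with hm'
  have h1 : S.piecewise (X + Matrix.diagonal d) (1 : Matrix (Fin n) (Fin n) ℝ)
      = S.piecewise (fun i => X i + m' i) m' := by
    ext i j
    by_cases hi : i ∈ S <;>
      simp [hm', Finset.piecewise, hi, Matrix.diagonal_apply, Matrix.one_apply]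
  have h2 := (Matrix.detRowAlternating (n := Fin n) (R := ℝ)).toMultilinearMap.map_piecewise_add
    (X : Fin n → Fin n → ℝ) m' S
  rw [pminor_eq_det_piecewise, h1]
  refine h2.trans (Finset.sum_congr rfl fun s hs => ?_)
  rw [Finset.mem_powerset] at hs
  have h3 : s.piecewise (X : Fin n → Fin n → ℝ) m'
      = fun i => (if i ∈ S \ s then d i else 1) •
        (s.piecewise X (1 : Matrix (Fin n) (Fin n) ℝ) : Fin n → Fin n → ℝ) i := by
    ext i j
    by_cases hi : i ∈ s
    · simp [Finset.piecewise, hi]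
    · by_cases hS : i ∈ S <;> simp [hm', Finset.piecewise, hi, hS]
  rw [h3, MultilinearMap.map_smul_univ, pminor_eq_det_piecewise, smul_eq_mul]
  congr 1
  rw [Finset.prod_ite_mem, Finset.univ_inter]

lemma prod_smul_indicator {n : ℕ} (T U : Finset (Fin n)) (t : ℝ) :
    ∏ i ∈ U, t * (if i ∈ T then (1 : ℝ) else 0) = (if U ⊆ T then 1 else 0) * t ^ U.card := by
  rw [Finset.prod_mul_distrib, Finset.prod_const, mul_comm]
  congr 1
  split_ifs with h
  · exact Finset.prod_eq_one fun i hi => if_pos (h hi)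
  · obtain ⟨i, hi, hiT⟩ := Finset.not_subset.mp h
    exact Finset.prod_eq_zero hi (if_neg hiT)

lemma iteratedDeriv_const_mul_pow_zero (c : ℝ) (m k : ℕ) :
    iteratedDeriv k (fun t : ℝ => c * t ^ m) 0 = if m = k then (k.factorial : ℝ) * c else 0 := by
  rw [iteratedDeriv_const_mul_field, iteratedDeriv_pow]
  rcases lt_trichotomy m k with h | h | h
  · simp [Nat.descFactorial_of_lt h, h.ne]
  · subst h
    simp [Nat.descFactorial_self, mul_comm]
  · simp [h.ne', Nat.sub_ne_zero_of_lt h]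

/-- The `|T|`-th derivative of a single principal minor in the direction `1_T`. -/
lemma iteratedDeriv_pminor {n : ℕ} (T S : Finset (Fin n)) (X : Matrix (Fin n) (Fin n) ℝ) :
    iteratedDeriv T.card (fun t : ℝ =>
        pminor (X + t • Matrix.diagonal (fun i => if i ∈ T then (1 : ℝ) else 0)) S) 0
      = if T ⊆ S then (T.card.factorial : ℝ) * pminor X (S \ T) else 0 := by
  have h1 : (fun t : ℝ =>
        pminor (X + t • Matrix.diagonal (fun i => if i ∈ T then (1 : ℝ) else 0)) S)
      = fun t : ℝ => ∑ s ∈ S.powerset,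
          ((if S \ s ⊆ T then 1 else 0) * pminor X s) * t ^ (S \ s).card := by
    funext t
    rw [← Matrix.diagonal_smul, pminor_add_diagonal]
    refine Finset.sum_congr rfl fun s _ => ?_
    simp only [Pi.smul_apply, smul_eq_mul]
    rw [prod_smul_indicator]
    ring
  rw [h1, iteratedDeriv_fun_sum (fun s _ => by fun_prop)]
  simp only [iteratedDeriv_const_mul_pow_zero]
  -- A nonzero term has `S \ s ⊆ T` and `|S \ s| = |T|`, hence `S \ s = T`.
  have key : ∀ s ∈ S.powerset, s ≠ S \ T ∨ ¬ T ⊆ S →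
      (if (S \ s).card = T.card then
        (T.card.factorial : ℝ) * ((if S \ s ⊆ T then 1 else 0) * pminor X s) else 0) = 0 := by
    intro s hs hne
    rw [Finset.mem_powerset] at hs
    split_ifs with hc hsub
    · have hST : S \ s = T := Finset.eq_of_subset_of_card_le hsub hc.ge
      rcases hne with hne | hne
      · exact absurd (by rw [← hST, Finset.sdiff_sdiff_eq_self hs]) hne
      · exact absurd (hST ▸ Finset.sdiff_subset) hne
    · simp
    · rfl
  split_ifs with hTS
  · rw [Finset.sum_eq_single_of_mem (S \ T) (Finset.mem_powerset.mpr Finset.sdiff_subset)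
      (fun s hs hne => key s hs (Or.inl hne)), Finset.sdiff_sdiff_eq_self hTS]
    simp
  · exact Finset.sum_eq_zero fun s hs => key s hs (Or.inr hTS)

lemma contDiff_pminor_line {n : ℕ} (S : Finset (Fin n)) (X D : Matrix (Fin n) (Fin n) ℝ)
    (m : WithTop ℕ∞) : ContDiff ℝ m (fun t : ℝ => pminor (X + t • D) S) := by
  simp only [pminor, Matrix.det_apply, Matrix.submatrix_apply, Matrix.add_apply, Matrix.smul_apply,
    smul_eq_mul]
  fun_prop

theorem stmt6 {n k : ℕ} (a : Finset (Fin n) → ℝ) (T : Finset (Fin n)) (hT : T.card ≤ k)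
    (X : Matrix (Fin n) (Fin n) ℝ) (hX : X.IsSymm) :
    iteratedDeriv T.card
        (fun t : ℝ =>
          lpm k a (X + t • Matrix.diagonal (fun i => if i ∈ T then (1 : ℝ) else 0))) 0
      = (Nat.factorial T.card : ℝ) *
          ∑ S ∈ (Finset.powersetCard k (Finset.univ : Finset (Fin n))).filter (fun S => T ⊆ S),
            a S * pminor X (S \ T) := by
  unfold lpm
  rw [iteratedDeriv_fun_sum
    (fun S _ => (contDiff_const.mul (contDiff_pminor_line S X _ _)).contDiffAt),
    Finset.sum_filter, Finset.mul_sum]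
  refine Finset.sum_congr rfl fun S _ => ?_
  rw [iteratedDeriv_const_mul_field, iteratedDeriv_pminor]
  split_ifs
  · ring
  · simp
end

section
/- Let A be a real m×n matrix, b ∈ ℝ^m, and let p be an LPM polynomial of degree k on symmetric n×n matrices with all coefficients nonnegative and p(AᵀA) ≠ 0. Then the univariate polynomial g(y) = p(AᵀA·y − Aᵀb bᵀA) has a real root, and its greatest real root equals p(Aᵀ(I + b bᵀ)A) / p(AᵀA) − 1. -/
/-!
Put `M = AᵀA` and `v = Aᵀb`, so that the matrices involved are `y M - v vᵀ` and `M + v vᵀ`. The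
matrix determinant lemma `det (M + t v vᵀ) = det M + t vᵀ adj(M) v`, applied to every `k × k`
principal submatrix, gives `p(y M - v vᵀ) = y ^ (k - 1) * (y D - E)` and `p(M + v vᵀ) = D + E`,
where `D = p(M)` and `E` is the combination, with the same coefficients, of the numbers
`vᵀ adj(M) v` attached to the submatrices. Hence `E / D = p(M + v vᵀ) / p(M) - 1` is a root and the
only other possible root is `0`. Each such number is nonnegative, since `t ↦ det (M + t v vᵀ)` is
affine and is nonnegative for all `t ≥ 0`; so `E / D ≥ 0` and `E / D` is the greatest root.
-/

open Matrix

/-- The matrix determinant lemma, with no invertibility assumption on `M`: both sides are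
continuous in `t` when `M` is replaced by `M + t I`, which is invertible for all but finitely
many `t`. -/
lemma det_add_vecMulVec_adjugate {ι : Type*} [Fintype ι] [DecidableEq ι]
    (M : Matrix ι ι ℝ) (u v : ι → ℝ) :
    (M + vecMulVec u v).det = M.det + v ⬝ᵥ (M.adjugate *ᵥ u) := by
  have hinv : ∀ N : Matrix ι ι ℝ, N.det ≠ 0 →
      (N + vecMulVec u v).det = N.det + v ⬝ᵥ (N.adjugate *ᵥ u) := by
    intro N hN
    rw [vecMulVec_eq Unit, det_add_replicateCol_mul_replicateRow (isUnit_iff_ne_zero.mpr hN),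
      Matrix.det_unique (n := Unit), Matrix.mul_assoc, ← replicateCol_mulVec, Matrix.inv_def]
    simp only [Matrix.add_apply, Matrix.one_apply_eq, Matrix.smul_mulVec,
      Ring.inverse_eq_inv', replicateRow_mul_replicateCol_apply, dotProduct_smul, smul_eq_mul]
    field_simp
  have hfin : {t : ℝ | (M + t • (1 : Matrix ι ι ℝ)).det = 0}.Finite := by
    have hne : (-M).charpoly ≠ 0 := (Matrix.charpoly_monic _).ne_zero
    refine ((-M).charpoly.roots.toFinset.finite_toSet).subset fun t ht => ?_
    have ht' : (M + t • (1 : Matrix ι ι ℝ)).det = 0 := ht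
    simp only [Finset.mem_coe, Multiset.mem_toFinset, Polynomial.mem_roots hne,
      Polynomial.IsRoot.def, Matrix.eval_charpoly]
    rw [← ht', Matrix.scalar_apply, Matrix.smul_one_eq_diagonal, sub_neg_eq_add, add_comm]
  have hdense : Dense {t : ℝ | (M + t • (1 : Matrix ι ι ℝ)).det = 0}ᶜ :=
    hfin.countable.dense_compl ℝ
  have hfun : (fun t : ℝ => (M + t • (1 : Matrix ι ι ℝ) + vecMulVec u v).det) =
      fun t : ℝ => (M + t • (1 : Matrix ι ι ℝ)).det
        + v ⬝ᵥ ((M + t • (1 : Matrix ι ι ℝ)).adjugate *ᵥ u) := by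
    have hc : Continuous fun t : ℝ => M + t • (1 : Matrix ι ι ℝ) := by fun_prop
    refine Continuous.ext_on hdense ?_ ?_ fun t ht => hinv _ ht
    · exact (hc.add continuous_const).matrix_det
    · exact hc.matrix_det.add
        (continuous_const.dotProduct (hc.matrix_adjugate.matrix_mulVec continuous_const))
  simpa using congrFun hfun 0

/-- The coefficient of `t` in `det (M + t v vᵀ)` is nonnegative, because this affine function of
`t` is nonnegative for all `t ≥ 0`. -/
lemma adjugate_quadratic_nonneg {ι : Type*} [Fintype ι] [DecidableEq ι]
    {M : Matrix ι ι ℝ} (hM : M.PosSemidef) (v : ι → ℝ) :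
    0 ≤ v ⬝ᵥ (M.adjugate *ᵥ v) := by
  have hdet : ∀ t : ℝ, 0 ≤ t → 0 ≤ M.det + t * (v ⬝ᵥ (M.adjugate *ᵥ v)) := by
    intro t ht
    have hv : (vecMulVec v v).PosSemidef := by
      simpa using posSemidef_vecMulVec_self_star v
    have h := (hM.add (hv.smul ht)).det_nonneg
    rwa [← smul_vecMulVec, det_add_vecMulVec_adjugate, Matrix.mulVec_smul, dotProduct_smul,
      smul_eq_mul] at h
  by_contra! hneg
  set c := v ⬝ᵥ (M.adjugate *ᵥ v)
  have hM0 : 0 ≤ M.det := hM.det_nonneg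
  have hnegpos : 0 < -c := by linarith
  -- at `t = det M / (-c) + 1` the affine function takes the value `c < 0`
  have h := hdet (M.det / (-c) + 1) (by positivity)
  have hc : M.det / (-c) * c = -M.det := by
    have := hneg.ne
    field_simp
  nlinarith

theorem stmt7 {m n k : ℕ} (hk : 1 ≤ k)
    (A : Matrix (Fin m) (Fin n) ℝ) (b : Fin m → ℝ)
    (a : Finset (Fin n) → ℝ) (ha : ∀ S, 0 ≤ a S)
    (hp : lpm k a (Aᵀ * A) ≠ 0) :
    IsGreatest {y : ℝ | lpm k a (y • (Aᵀ * A) - Aᵀ * Matrix.vecMulVec b b * A) = 0}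
      (lpm k a (Aᵀ * (1 + Matrix.vecMulVec b b) * A) / lpm k a (Aᵀ * A) - 1) := by
  set M := Aᵀ * A with hMdef
  have hM : M.PosSemidef := by
    simpa [Matrix.conjTranspose_eq_transpose_of_trivial] using posSemidef_conjTranspose_mul_self A
  set v : Fin n → ℝ := b ᵥ* A with hv
  have hrank : Aᵀ * vecMulVec b b * A = vecMulVec v v := by
    rw [Matrix.mul_vecMulVec, Matrix.vecMulVec_mul, Matrix.mulVec_transpose]
  have hplus : Aᵀ * (1 + vecMulVec b b) * A = M + vecMulVec v v := by
    rw [Matrix.mul_add, Matrix.add_mul, hrank, Matrix.mul_one]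
  rw [hplus, hrank]
  let c : Finset (Fin n) → ℝ := fun S =>
    (fun i : {i : Fin n // i ∈ S} => v i.1) ⬝ᵥ
      ((M.submatrix (fun i : {i : Fin n // i ∈ S} => i.1)
        (fun i : {i : Fin n // i ∈ S} => i.1)).adjugate *ᵥ
          (fun i : {i : Fin n // i ∈ S} => v i.1))
  have hc : ∀ S, 0 ≤ c S := fun S => adjugate_quadratic_nonneg (hM.submatrix _) _
  have hminor_plus : ∀ S, pminor (M + vecMulVec v v) S = pminor M S + c S :=
    fun S => det_add_vecMulVec_adjugate _ _ _
  have hminor_pencil : ∀ (y : ℝ) S, S.card = k → pminor (y • M - vecMulVec v v) S =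
      y ^ (k - 1) * (y * pminor M S - c S) := by
    intro y S hS
    have hcard : Fintype.card {i : Fin n // i ∈ S} = k := by simp [hS]
    have h := det_add_vecMulVec_adjugate
      (y • M.submatrix (fun i : {i : Fin n // i ∈ S} => i.1)
        (fun i : {i : Fin n // i ∈ S} => i.1))
      (fun i : {i : Fin n // i ∈ S} => -v i.1) (fun i : {i : Fin n // i ∈ S} => v i.1)
    have hneg : (fun i : {i : Fin n // i ∈ S} => -v i.1) =
      -(fun i : {i : Fin n // i ∈ S} => v i.1) := rfl
    have hpow : y ^ k = y ^ (k - 1) * y := by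
      rw [← pow_succ, Nat.sub_add_cancel hk]
    have hsub : (y • M - vecMulVec v v).submatrix (fun i : {i : Fin n // i ∈ S} => i.1)
        (fun i : {i : Fin n // i ∈ S} => i.1) =
        y • M.submatrix (fun i : {i : Fin n // i ∈ S} => i.1)
          (fun i : {i : Fin n // i ∈ S} => i.1) +
        vecMulVec (fun i : {i : Fin n // i ∈ S} => -v i.1)
          (fun i : {i : Fin n // i ∈ S} => v i.1) := by
      ext i j
      simp [vecMulVec_apply, sub_eq_add_neg]
    rw [pminor, hsub, h, Matrix.det_smul, Matrix.adjugate_smul, hcard, hneg, Matrix.mulVec_neg,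
      dotProduct_neg, Matrix.smul_mulVec, dotProduct_smul, smul_eq_mul, hpow]
    simp only [pminor, c]
    ring
  set D := lpm k a M with hD
  set E := ∑ S ∈ Finset.powersetCard k (Finset.univ : Finset (Fin n)), a S * c S with hE
  have hEnonneg : 0 ≤ E := Finset.sum_nonneg fun S _ => mul_nonneg (ha S) (hc S)
  have hDpos : 0 < D := lt_of_le_of_ne
    (Finset.sum_nonneg fun S _ => mul_nonneg (ha S) (hM.submatrix _).det_nonneg) (Ne.symm hp)
  have hpplus : lpm k a (M + vecMulVec v v) = D + E := by
    simp only [hD, hE, lpm, hminor_plus, mul_add, Finset.sum_add_distrib]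
  have hpencil : ∀ y : ℝ, lpm k a (y • M - vecMulVec v v) = y ^ (k - 1) * (y * D - E) := by
    intro y
    simp only [hD, hE, lpm, Finset.mul_sum, ← Finset.sum_sub_distrib]
    refine Finset.sum_congr rfl fun S hS => ?_
    rw [hminor_pencil y S (Finset.mem_powersetCard.mp hS).2]
    ring
  have hroot : lpm k a (M + vecMulVec v v) / D - 1 = E / D := by
    rw [hpplus]
    field_simp
    ring
  rw [hroot]
  constructor
  · change lpm k a ((E / D) • M - vecMulVec v v) = 0
    rw [hpencil, div_mul_cancel₀ _ hp, sub_self, mul_zero]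
  · intro y hy
    have hy' : lpm k a (y • M - vecMulVec v v) = 0 := hy
    rw [hpencil] at hy'
    rcases mul_eq_zero.mp hy' with h | h
    · rw [eq_zero_of_pow_eq_zero h]
      positivity
    · rw [le_div_iff₀ hDpos]
      linarith
end

section
/- Let p be an LPM polynomial of degree k ≥ 1 on symmetric n×n matrices, let M be a real symmetric n×n matrix, and let v ∈ ℝⁿ. Then the univariate polynomial g(y) = p(My − vvᵀ) is divisible by y^{k−1}, and its coefficient of y^k equals p(M); in particular g(y) = p(M)·y^k + c·y^{k−1} for some real constant c. -/
/-!
A rank-one perturbation changes a determinant affinely: bordering `A` by `u` and `t • w` gives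
`det (A - t u wᵀ) = det [A, u; t wᵀ, 1]`, and the last row of the bordered matrix is affine in `t`
(`exists_det_sub_smul_vecMulVec`). For `y ≠ 0` and a matrix `A` of size `k`, factoring `y` out gives
`det (y A - u wᵀ) = y ^ k * det (A - y⁻¹ u wᵀ) = y ^ k * det A + c * y ^ (k - 1)`, and both sides are
continuous in `y`, so the identity also holds at `y = 0`. Applying this to each principal submatrix
and taking the linear combination proves the theorem.
-/

open Matrix

/-- The determinant is affine along rank-one directions; `A` need not be invertible. -/
lemma exists_det_sub_smul_vecMulVec {m : Type*} [Fintype m] [DecidableEq m]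
    (A : Matrix m m ℝ) (u w : m → ℝ) :
    ∃ c : ℝ, ∀ t : ℝ, (A - t • vecMulVec u w).det = A.det + t * c := by
  refine ⟨(fromBlocks A (replicateCol Unit u) (replicateRow Unit w) 0).det, fun t => ?_⟩
  -- Each bordered matrix is written as a row update of `B`, to use linearity in the last row.
  set B : Matrix (m ⊕ Unit) (m ⊕ Unit) ℝ := fromBlocks A (replicateCol Unit u) 0 1 with hB
  have hB' : B.updateRow (Sum.inr ()) (Sum.elim 0 1) = B := by
    ext (i | i) (j | j) <;> simp [B, updateRow_apply]
  have hC : B.updateRow (Sum.inr ()) (Sum.elim w 0) =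
      fromBlocks A (replicateCol Unit u) (replicateRow Unit w) 0 := by
    ext (i | i) (j | j) <;> simp [B, updateRow_apply]
  have hD : B.updateRow (Sum.inr ()) ((Sum.elim 0 1 : m ⊕ Unit → ℝ) + t • Sum.elim w 0) =
      fromBlocks A (replicateCol Unit u) (replicateRow Unit (t • w)) 1 := by
    ext (i | i) (j | j) <;> simp [B, updateRow_apply]
  have hE : A - t • vecMulVec u w = A - replicateCol Unit u * replicateRow Unit (t • w) := by
    ext i j
    simp [vecMulVec_apply, Matrix.mul_apply]
  rw [hE, ← det_fromBlocks_one₂₂, ← hD, det_updateRow_add, det_updateRow_smul, hB', hC]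
  simp [hB]

lemma exists_det_smul_sub_vecMulVec {m : Type*} [Fintype m] [DecidableEq m] {k : ℕ}
    (hk : 1 ≤ k) (hm : Fintype.card m = k) (A : Matrix m m ℝ) (u w : m → ℝ) :
    ∃ c : ℝ, ∀ y : ℝ, (y • A - vecMulVec u w).det = A.det * y ^ k + c * y ^ (k - 1) := by
  obtain ⟨c, hc⟩ := exists_det_sub_smul_vecMulVec A u w
  refine ⟨c, fun y => ?_⟩
  refine congrFun (Continuous.ext_on (f := fun y : ℝ => (y • A - vecMulVec u w).det)
    (g := fun y : ℝ => A.det * y ^ k + c * y ^ (k - 1))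
    (dense_compl_singleton (0 : ℝ)) ?_ ?_ ?_) y
  · exact Continuous.matrix_det (by fun_prop)
  · fun_prop
  · intro y hy
    have hy : y ≠ 0 := hy
    have h : y • A - vecMulVec u w = y • (A - y⁻¹ • vecMulVec u w) := by
      rw [smul_sub, smul_smul, mul_inv_cancel₀ hy, one_smul]
    obtain ⟨j, rfl⟩ : ∃ j, k = j + 1 := ⟨k - 1, by omega⟩
    simp only [h, det_smul, hm, hc, Nat.add_sub_cancel]
    field_simp
    ring

theorem stmt8 {n k : ℕ} (hk : 1 ≤ k) (a : Finset (Fin n) → ℝ)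
    (M : Matrix (Fin n) (Fin n) ℝ) (hM : M.IsSymm) (v : Fin n → ℝ) :
    ∃ c : ℝ, ∀ y : ℝ,
      lpm k a (y • M - Matrix.vecMulVec v v) = lpm k a M * y ^ k + c * y ^ (k - 1) := by
  have key : ∀ S : Finset (Fin n), ∃ c : ℝ, S.card = k → ∀ y : ℝ,
      pminor (y • M - vecMulVec v v) S = pminor M S * y ^ k + c * y ^ (k - 1) := by
    intro S
    by_cases hS : S.card = k
    · obtain ⟨c, hc⟩ := exists_det_smul_sub_vecMulVec hk (m := {i : Fin n // i ∈ S})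
        (by simpa using hS) (M.submatrix (fun i => i.1) (fun i => i.1))
        (fun i => v i.1) (fun i => v i.1)
      exact ⟨c, fun _ y => hc y⟩
    · exact ⟨0, fun h => absurd h hS⟩
  choose c hc using key
  refine ⟨∑ S ∈ Finset.powersetCard k (Finset.univ : Finset (Fin n)), a S * c S, fun y => ?_⟩
  simp only [lpm, Finset.sum_mul, ← Finset.sum_add_distrib]
  refine Finset.sum_congr rfl fun S hS => ?_
  rw [hc S (Finset.mem_powersetCard.mp hS).2 y]
  ring
end

section
/- Let A be a real symmetric n×n matrix, v ∈ ℝⁿ, and 0 ≤ m ≤ n. Then the function t ↦ c_n^m(A + t·vvᵀ) is an affine function of t; that is, it is a polynomial in t of degree at most 1. -/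
/-!
Each principal submatrix of `A + t • v vᵀ` is again a rank-one perturbation `M + t • w wᵀ`. By the
Schur complement its determinant equals that of the bordered matrix `[[M, -t w], [wᵀ, 1]]`, in which
`t` occurs only in the last column, and affinely. Linearity of the determinant in that column makes
every principal minor affine in `t` (`det_add_smul_vecMulVec_affine`), and a sum of affine functions
is affine.
-/

open Matrix

/-- The characteristic coefficient `c_n^m`, the sum of all `m × m` principal minors. -/
noncomputable def cnk {n : ℕ} (m : ℕ) (X : Matrix (Fin n) (Fin n) ℝ) : ℝ :=
  ∑ S ∈ Finset.powersetCard m (Finset.univ : Finset (Fin n)), pminor X S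

/-- The determinant is affine along a rank-one direction; no invertibility of `M` is needed. -/
lemma det_add_smul_vecMulVec_affine {ι : Type*} [Fintype ι] [DecidableEq ι]
    (M : Matrix ι ι ℝ) (u w : ι → ℝ) :
    ∃ c d : ℝ, ∀ t : ℝ, (M + t • Matrix.vecMulVec u w).det = c + d * t := by
  let N : Matrix (ι ⊕ Unit) (ι ⊕ Unit) ℝ :=
    Matrix.fromBlocks M 0 (Matrix.replicateRow Unit w) 1
  let e : ι ⊕ Unit → ℝ := Sum.elim 0 1
  let f : ι ⊕ Unit → ℝ := Sum.elim (-u) 0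
  refine ⟨(N.updateCol (Sum.inr ()) e).det, (N.updateCol (Sum.inr ()) f).det, fun t => ?_⟩
  have hblock : N.updateCol (Sum.inr ()) (e + t • f) =
      Matrix.fromBlocks M (-(t • Matrix.replicateCol Unit u)) (Matrix.replicateRow Unit w) 1 := by
    ext (i | i) (j | j) <;> simp [N, e, f]
  have hschur : M + t • Matrix.vecMulVec u w =
      M - -(t • Matrix.replicateCol Unit u) * Matrix.replicateRow Unit w := by
    ext i j
    simp [Matrix.mul_apply, Matrix.vecMulVec_apply]
  rw [hschur, ← Matrix.det_fromBlocks_one₂₂, ← hblock, Matrix.det_updateCol_add,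
    Matrix.det_updateCol_smul, mul_comm t]

theorem stmt12 {n m : ℕ} (hm : m ≤ n)
    (A : Matrix (Fin n) (Fin n) ℝ) (hA : A.IsSymm) (v : Fin n → ℝ) :
    ∃ c d : ℝ, ∀ t : ℝ, cnk m (A + t • Matrix.vecMulVec v v) = c + d * t := by
  have hminor : ∀ S : Finset (Fin n), ∃ c d : ℝ, ∀ t : ℝ,
      pminor (A + t • Matrix.vecMulVec v v) S = c + d * t := fun S =>
    det_add_smul_vecMulVec_affine
      (A.submatrix (fun i : {i : Fin n // i ∈ S} => i.1) (fun i : {i : Fin n // i ∈ S} => i.1))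
      (fun i => v i.1) (fun i => v i.1)
  choose c d h using hminor
  refine ⟨∑ S ∈ Finset.powersetCard m Finset.univ, c S,
    ∑ S ∈ Finset.powersetCard m Finset.univ, d S, fun t => ?_⟩
  simp only [cnk, h, Finset.sum_add_distrib, Finset.sum_mul]
end

section
/- Let X be a real symmetric n×n matrix with eigendecomposition X = QΛQᵀ, where Q is orthogonal and Λ is diagonal with diagonal entries λ₁,…,λₙ. Let 2 ≤ k ≤ n and let i be an index with X_ii ≠ 0. Then Σ_{|S|=k, i∈S} det(X|_S) = X_ii · e_n^{k−1}(λ₁,…,λₙ) − Σ_{j=1}^{n} (QᵀX_i)_j² · e_{n−1}^{k−2}(λ₁,…,λ_{j−1},λ_{j+1},…,λₙ), where X_i denotes the i-th column of X. -/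
/-!
Let `t` be an indeterminate. The coefficient of `t ^ k` in `det (1 + t X)` is the sum of all
`k × k` principal minors of `X`. Replacing row `i` of `X` by zero kills exactly the principal
minors whose index set contains `i`, so the left-hand side is the coefficient of `t ^ k` in the
difference of the two determinants. By linearity in row `i`, Cramer's rule and symmetry of `X`,
this difference is `t * (adj (1 + t X) * X) i i`. Since `1 + t X = Q (1 + t Λ) Qᵀ`, it equals
`t * ∑ j, Q i j ^ 2 * λ j * ∏ l ≠ j, (1 + t λ l)` (`det_sub_det_updateRow`), whose coefficient
is `∑ j, Q i j ^ 2 * λ j * e_{k-1}(λ without λ j)`. The claimed form follows from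
`e_{k-1}(λ) = e_{k-1}(λ without λ j) + λ j * e_{k-2}(λ without λ j)` and
`(Qᵀ X_i) j = λ j * Q i j`.
-/

open Matrix

/-- The elementary symmetric polynomial of degree `r` in the variables `f j`, `j ∈ s`. -/
noncomputable def esym {n : ℕ} (s : Finset (Fin n)) (r : ℕ) (f : Fin n → ℝ) : ℝ :=
  ∑ R ∈ s.powersetCard r, ∏ j ∈ R, f j

open Polynomial in
theorem coeff_prod_one_add_X {n : ℕ} (s : Finset (Fin n)) (r : ℕ) (f : Fin n → ℝ) :
    (∏ j ∈ s, (1 + (X : ℝ[X]) * C (f j))).coeff r = esym s r f := by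
  rw [Finset.prod_one_add, finsetSum_coeff, esym, ← Finset.sum_filter_add_sum_filter_not
    s.powerset (fun R => R.card = r), ← Finset.powersetCard_eq_filter]
  have h : ∀ R : Finset (Fin n), (∏ j ∈ R, (X : ℝ[X]) * C (f j)).coeff r
      = if R.card = r then ∏ j ∈ R, f j else 0 := by
    intro R
    rw [Finset.prod_mul_distrib, Finset.prod_const, ← map_prod, coeff_mul_C, coeff_X_pow]
    simp [eq_comm]
  simp only [h]
  rw [Finset.sum_congr rfl (fun R hR => if_pos (Finset.mem_powersetCard.1 hR).2),
    Finset.sum_congr rfl (fun R hR => if_neg (Finset.mem_filter.1 hR).2)]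
  simp

theorem esym_succ_eq {n : ℕ} (j : Fin n) (r : ℕ) (f : Fin n → ℝ) :
    esym Finset.univ (r + 1) f
      = esym (Finset.univ.erase j) (r + 1) f + f j * esym (Finset.univ.erase j) r f := by
  rw [← coeff_prod_one_add_X, ← Finset.mul_prod_erase _ _ (Finset.mem_univ j), add_mul, one_mul,
    Polynomial.coeff_add, coeff_prod_one_add_X, mul_assoc, Polynomial.coeff_X_mul,
    Polynomial.coeff_C_mul, coeff_prod_one_add_X]

theorem pminor_updateRow_zero {n : ℕ} (X : Matrix (Fin n) (Fin n) ℝ) (i : Fin n)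
    (S : Finset (Fin n)) :
    pminor (X.updateRow i 0) S = if i ∈ S then 0 else pminor X S := by
  unfold pminor
  split_ifs with h
  · apply Matrix.det_eq_zero_of_row_eq_zero ⟨i, h⟩
    simp
  · congr 1
    ext a b
    have : a.1 ≠ i := fun e => h (e ▸ a.2)
    simp [this]

/-- For orthogonal `Q`, the adjugate commutes with conjugation by `Q`, because
`adj Q = det Q • Qᵀ` and `det Q ^ 2 = 1`. -/
theorem adjugate_conj {n : ℕ} {R : Type*} [CommRing R] (Q A : Matrix (Fin n) (Fin n) R)
    (hQ : Qᵀ * Q = 1) : (Q * A * Qᵀ).adjugate = Q * A.adjugate * Qᵀ := by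
  have hQ' : Q * Qᵀ = 1 := mul_eq_one_comm.1 hQ
  have hd : Q.det * Q.det = 1 := by
    have := congrArg Matrix.det hQ
    rwa [det_mul, det_transpose, det_one] at this
  have h1 : Q.adjugate = Q.det • Qᵀ := by
    calc Q.adjugate = Q.adjugate * Q * Qᵀ := by rw [Matrix.mul_assoc, hQ', Matrix.mul_one]
      _ = _ := by rw [adjugate_mul, smul_mul, Matrix.one_mul]
  have h2 : Qᵀ.adjugate = Q.det • Q := by
    rw [← adjugate_transpose, h1, transpose_smul, transpose_transpose]
  rw [adjugate_mul_distrib, adjugate_mul_distrib, h1, h2]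
  simp only [Matrix.mul_smul, Matrix.smul_mul, smul_smul, hd, one_smul, Matrix.mul_assoc]

theorem conj_diagonal_apply_self {n : ℕ} {R : Type*} [CommRing R]
    (Q : Matrix (Fin n) (Fin n) R) (d : Fin n → R) (i : Fin n) :
    (Q * diagonal d * Qᵀ) i i = ∑ j, Q i j ^ 2 * d j := by
  rw [Matrix.mul_apply]
  refine Finset.sum_congr rfl fun j _ => ?_
  rw [mul_diagonal, transpose_apply]
  ring

/-- Zeroing row `i` of `Y = Q Λ Qᵀ` changes `det (1 + t Y)` by `t * (adj (1 + t Y) * Y) i i`,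
here written out in the eigenbasis. -/
theorem det_sub_det_updateRow {n : ℕ} {R : Type*} [CommRing R]
    (Y Q : Matrix (Fin n) (Fin n) R) (d : Fin n → R) (t : R)
    (hQ : Qᵀ * Q = 1) (hY : Y = Q * diagonal d * Qᵀ) (i : Fin n) :
    (1 + t • Y).det - (1 + t • Y.updateRow i 0).det
      = t * ∑ j, Q i j ^ 2 * (d j * ∏ l ∈ Finset.univ.erase j, (1 + t * d l)) := by
  have hQ' : Q * Qᵀ = 1 := mul_eq_one_comm.1 hQ
  have hsymm : Yᵀ = Y := by
    rw [hY]; simp [transpose_mul, Matrix.mul_assoc]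
  have hA : 1 + t • Y = Q * diagonal (fun l => 1 + t * d l) * Qᵀ := by
    have : diagonal (fun l => 1 + t * d l) = 1 + t • diagonal d := by
      ext a b
      by_cases h : a = b
      · subst h; simp
      · simp [h]
    rw [this, hY, Matrix.mul_add, Matrix.add_mul, Matrix.mul_one, hQ', Matrix.mul_smul,
      Matrix.smul_mul]
  have h1 : (1 + t • Y).updateRow i ((1 : Matrix (Fin n) (Fin n) R) i + (t • Y) i)
      = 1 + t • Y := updateRow_eq_self _ _
  have h2 : (1 + t • Y).updateRow i ((1 : Matrix (Fin n) (Fin n) R) i)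
      = 1 + t • Y.updateRow i 0 := by
    ext a b
    by_cases h : a = i
    · subst h; simp
    · simp [h]
  have h3 : (1 + t • Y).det - (1 + t • Y.updateRow i 0).det
      = ((1 + t • Y).updateRow i ((t • Y) i)).det := by
    rw [← h2]
    nth_rw 1 [← h1]
    rw [det_updateRow_add]
    ring
  have hcol : (t • Y) i = fun l => (t • Y) l i := by
    ext l
    have := congrFun (congrFun hsymm l) i
    simp only [transpose_apply] at this
    simp [this]
  have hAt : (1 + t • Y)ᵀ = 1 + t • Y := by simp [hsymm]
  have h4 : ((1 + t • Y).updateRow i ((t • Y) i)).det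
      = ((1 + t • Y).adjugate * (t • Y)) i i := by
    rw [← cramer_transpose_apply, cramer_eq_adjugate_mulVec, hAt, hcol]
    rfl
  rw [h3, h4, hA, adjugate_conj _ _ hQ, adjugate_diagonal, Matrix.mul_smul, Matrix.smul_apply,
    smul_eq_mul]
  congr 1
  have h5 : ∀ D : Matrix (Fin n) (Fin n) R, Q * D * Qᵀ * Y = Q * (D * diagonal d) * Qᵀ := by
    intro D
    calc Q * D * Qᵀ * Y = Q * D * (Qᵀ * Q) * diagonal d * Qᵀ := by
          rw [hY]; simp only [Matrix.mul_assoc]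
      _ = _ := by rw [hQ, Matrix.mul_one]; simp only [Matrix.mul_assoc]
  rw [h5, diagonal_mul_diagonal, conj_diagonal_apply_self]
  exact Finset.sum_congr rfl fun j _ => by ring

open Polynomial in
theorem sum_pminor_mem_eq {n r : ℕ} (Y Q : Matrix (Fin n) (Fin n) ℝ) (lam : Fin n → ℝ)
    (hQ : Qᵀ * Q = 1) (hY : Y = Q * Matrix.diagonal lam * Qᵀ) (i : Fin n) :
    ∑ S ∈ (Finset.powersetCard (r + 1) (Finset.univ : Finset (Fin n))).filter (fun S => i ∈ S),
        pminor Y S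
      = ∑ j, Q i j ^ 2 * (lam j * esym (Finset.univ.erase j) r lam) := by
  have hQC : (Q.map (C : ℝ → ℝ[X]))ᵀ * Q.map C = 1 := by
    rw [← transpose_map, ← Matrix.map_mul, hQ]
    simp
  have hYC : Y.map (C : ℝ → ℝ[X])
      = Q.map C * Matrix.diagonal (fun l => C (lam l)) * (Q.map C)ᵀ := by
    rw [hY, Matrix.map_mul, Matrix.map_mul, transpose_map, diagonal_map (map_zero _)]
  have hup : (Y.map (C : ℝ → ℝ[X])).updateRow i 0 = (Y.updateRow i 0).map C := by
    ext a b : 2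
    by_cases h : a = i
    · subst h; simp
    · simp [h]
  have key := congrArg (fun p => p.coeff (r + 1))
    (det_sub_det_updateRow (Y.map C) (Q.map C) (fun l => C (lam l)) (X : ℝ[X]) hQC hYC i)
  simp only [hup, coeff_sub, coeff_X_mul, finsetSum_coeff,
    coeff_det_one_add_X_smul_eq_sum_minors] at key
  have hR : ∀ j, ((Q.map (C : ℝ → ℝ[X])) i j ^ 2 * (C (lam j) *
      ∏ l ∈ Finset.univ.erase j, (1 + X * C (lam l)))).coeff r
      = Q i j ^ 2 * (lam j * esym (Finset.univ.erase j) r lam) := by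
    intro j
    rw [map_apply, ← C_pow, coeff_C_mul, coeff_C_mul, coeff_prod_one_add_X]
  simp only [hR] at key
  rw [← key]
  change _ = ∑ S ∈ _, pminor Y S - ∑ S ∈ _, pminor (Y.updateRow i 0) S
  rw [← Finset.sum_sub_distrib, Finset.sum_filter]
  refine Finset.sum_congr rfl fun S _ => ?_
  rw [pminor_updateRow_zero]
  split_ifs <;> simp

theorem stmt13 {n k : ℕ} (hk2 : 2 ≤ k) (hkn : k ≤ n)
    (X Q : Matrix (Fin n) (Fin n) ℝ) (lam : Fin n → ℝ)
    (hQ : Qᵀ * Q = 1)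
    (hX : X = Q * Matrix.diagonal lam * Qᵀ)
    (i : Fin n) (hXii : X i i ≠ 0) :
    ∑ S ∈ (Finset.powersetCard k (Finset.univ : Finset (Fin n))).filter (fun S => i ∈ S),
        pminor X S
      = X i i * esym Finset.univ (k - 1) lam -
        ∑ j : Fin n,
          (Qᵀ.mulVec (fun l => X l i) j) ^ 2 * esym (Finset.univ.erase j) (k - 2) lam := by
  obtain ⟨r, rfl⟩ : ∃ r, k = r + 1 + 1 := ⟨k - 2, by omega⟩
  have hcol : ∀ j, Qᵀ.mulVec (fun l => X l i) j = lam j * Q i j := by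
    intro j
    have h : Qᵀ * X = diagonal lam * Qᵀ := by
      rw [hX, ← Matrix.mul_assoc, ← Matrix.mul_assoc, hQ, Matrix.one_mul]
    have h' := congrFun (congrFun h j) i
    rw [diagonal_mul, transpose_apply] at h'
    exact h'
  have hii : X i i = ∑ j, Q i j ^ 2 * lam j := by
    rw [hX, conj_diagonal_apply_self]
  rw [sum_pminor_mem_eq X Q lam hQ hX i, hii, Finset.sum_mul, ← Finset.sum_sub_distrib]
  refine Finset.sum_congr rfl fun j _ => ?_
  have e1 : r + 1 + 1 - 1 = r + 1 := rfl
  have e2 : r + 1 + 1 - 2 = r := rfl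
  rw [hcol, e1, e2, esym_succ_eq j r lam]
  ring
end

section
/- Let g be a real univariate polynomial of degree k ≥ 1 with positive leading coefficient whose roots in ℂ are all real, and let r be its largest root. Then for every real t > r: g(t) > 0, g'(t) > 0, and the Newton iterate satisfies r ≤ t − g(t)/g'(t) ≤ t − (t − r)/k; in particular (t − g(t)/g'(t)) − r ≤ (1 − 1/k)(t − r). -/
/-!
Over `ℝ` the polynomial `g` splits, so with `z₁, …, z_k ≤ r` its roots, `g(t)` is the positive
leading coefficient times `∏ (t - zᵢ) > 0`, and `g'(t) / g(t) = ∑ 1 / (t - zᵢ)`. Every summand is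
positive and at most `1 / (t - r)`, and the summand of the root `r` equals `1 / (t - r)`; hence
`1 / (t - r) ≤ g'(t) / g(t) ≤ k / (t - r)`, and all the claims follow by taking reciprocals.
-/

open Polynomial

theorem splits_of_forall_aeval_im_eq_zero (g : ℝ[X])
    (hreal : ∀ z : ℂ, aeval z g = 0 → z.im = 0) : g.Splits := by
  refine Splits.of_splits_map (algebraMap ℝ ℂ) (IsAlgClosed.splits _) fun a ha => ?_
  have h0 : aeval a g = 0 := by
    have := isRoot_of_mem_roots ha
    rwa [IsRoot.def, eval_map_algebraMap] at this
  exact ⟨a.re, Complex.ext (by simp) (by simp [hreal a h0])⟩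

theorem stmt15 (g : Polynomial ℝ) (hdeg : 1 ≤ g.natDegree)
    (hlead : 0 < g.leadingCoeff)
    (hreal : ∀ z : ℂ, Polynomial.aeval z g = 0 → z.im = 0)
    (r : ℝ) (hr : IsGreatest {x : ℝ | g.eval x = 0} r)
    (t : ℝ) (ht : r < t) :
    0 < g.eval t ∧ 0 < g.derivative.eval t ∧
      r ≤ t - g.eval t / g.derivative.eval t ∧
      t - g.eval t / g.derivative.eval t ≤ t - (t - r) / g.natDegree ∧
      (t - g.eval t / g.derivative.eval t) - r ≤ (1 - 1 / (g.natDegree : ℝ)) * (t - r) := by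
  have hs := splits_of_forall_aeval_im_eq_zero g hreal
  have hg0 : g ≠ 0 := leadingCoeff_ne_zero.mp hlead.ne'
  have htr : 0 < t - r := sub_pos.mpr ht
  have hk : (0 : ℝ) < g.natDegree := by exact_mod_cast hdeg
  have hle : ∀ z ∈ g.roots, z ≤ r := fun z hz => hr.2 (isRoot_of_mem_roots hz)
  have hrmem : r ∈ g.roots := (mem_roots hg0).mpr hr.1
  have hpos : 0 < g.eval t := by
    rw [hs.eval_eq_prod_roots]
    refine mul_pos hlead (Multiset.prod_pos fun a ha => ?_)
    obtain ⟨z, hz, rfl⟩ := Multiset.mem_map.mp ha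
    linarith [hle z hz]
  have hder := hs.eval_derivative_eq_eval_mul_sum hpos.ne'
  set S := (g.roots.map fun z ↦ 1 / (t - z)).sum with hS
  have hlow : 1 / (t - r) ≤ S := by
    refine Multiset.single_le_sum (fun a ha => ?_) _ (Multiset.mem_map_of_mem _ hrmem)
    obtain ⟨z, hz, rfl⟩ := Multiset.mem_map.mp ha
    exact one_div_nonneg.mpr (by linarith [hle z hz])
  have hup : S ≤ g.natDegree * (1 / (t - r)) := by
    have h := Multiset.sum_le_card_nsmul (g.roots.map fun z ↦ 1 / (t - z)) (1 / (t - r))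
      (fun a ha => by
        obtain ⟨z, hz, rfl⟩ := Multiset.mem_map.mp ha
        exact one_div_le_one_div_of_le htr (by linarith [hle z hz]))
    rwa [Multiset.card_map, ← hs.natDegree_eq_card_roots, nsmul_eq_mul] at h
  have hSpos : 0 < S := (one_div_pos.mpr htr).trans_le hlow
  have hdpos : 0 < g.derivative.eval t := hder ▸ mul_pos hpos hSpos
  have hquot : g.eval t / g.derivative.eval t = 1 / S := by
    rw [hder]; field_simp
  have h1 : 1 / S ≤ t - r := (one_div_le htr hSpos).mp hlow
  have h2 : (t - r) / g.natDegree ≤ 1 / S := by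
    rw [mul_one_div, le_div_iff₀ htr] at hup
    rw [div_le_div_iff₀ hk hSpos]
    linarith
  refine ⟨hpos, hdpos, ?_, ?_, ?_⟩
  · rw [hquot]; linarith
  · rw [hquot]; linarith
  · rw [hquot, sub_mul, one_mul, one_div_mul_eq_div]; linarith
end
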